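/- Let E be a complex Hilbert space and let S be a set of orthogonal projection operators on E (continuous linear maps T : E →L[ℂ] E with T = T* and T ∘ T = T). For a set A of orthogonal projections, let A^! denote the set of all orthogonal projections on E that commute with every element of A. Then S = (S^!)^! if and only if there exists a von Neumann algebra M on E such that S is exactly the set of orthogonal projections belonging to M. -/

import Mathlib

variable {E : Type*} [NormedAddCommGroup E] [InnerProductSpace ℂ E] [CompleteSpace E]

/-- An orthogonal projection operator on `E`: a continuous linear map that is
self-adjoint and idempotent. -/
def IsOrthoProj (T : E →L[ℂ] E) : Prop :=
  ContinuousLinearMap.adjoint T = T ∧ T ∘L T = T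

/-- The commutant `A^!` of a set `A` of operators within the orthogonal
projections: the set of orthogonal projections commuting with every element of `A`. -/
def projCommutant (A : Set (E →L[ℂ] E)) : Set (E →L[ℂ] E) :=
  {T | IsOrthoProj T ∧ ∀ S ∈ A, T ∘L S = S ∘L T}

/-! Both implications reduce to one fact: an operator commuting with every projection of a von
Neumann algebra `M` commutes with all of `M`. It suffices that `M` is the norm closure of the
linear span of its projections. For a self-adjoint `a ∈ M`, the projection `p` onto the kernel of
`a⁻` lies in `M`, and the symmetry `u = 2p - 1` satisfies `a = |a| u`. Hence
`a - (‖a‖/2) u = (|a| - ‖a‖/2) u` has norm at most `‖a‖/2`, since `0 ≤ |a| ≤ ‖a‖`; iterating this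
halving approximates `a` by linear combinations of projections of `M`.
-/

theorem subset_closure_of_norm_sub_le_mul {G : Type*} [SeminormedAddCommGroup G]
    {V : AddSubmonoid G} {W : Set G} {r : NNReal} (hr : r < 1)
    (h : ∀ a ∈ W, ∃ v ∈ V, a - v ∈ W ∧ ‖a - v‖ ≤ r * ‖a‖) : W ⊆ closure V := by
  have approx (n : ℕ) : ∀ a ∈ W, ∃ v ∈ V, ‖a - v‖ ≤ r ^ n * ‖a‖ := by
    induction n with
    | zero => exact fun a _ ↦ ⟨0, V.zero_mem, by simp⟩
    | succ n ih =>
      intro a ha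
      obtain ⟨v, hv, hav, hle⟩ := h a ha
      obtain ⟨w, hw, hle'⟩ := ih (a - v) hav
      refine ⟨v + w, V.add_mem hv hw, ?_⟩
      calc ‖a - (v + w)‖ = ‖a - v - w‖ := by rw [sub_sub]
        _ ≤ r ^ n * ‖a - v‖ := hle'
        _ ≤ r ^ n * (r * ‖a‖) := by gcongr
        _ = r ^ (n + 1) * ‖a‖ := by ring
  intro a ha
  have tendsto_zero : Filter.Tendsto (fun n : ℕ ↦ (r : ℝ) ^ n * ‖a‖) Filter.atTop (nhds 0) := by
    simpa using (tendsto_pow_atTop_nhds_zero_of_lt_one r.coe_nonneg hr).mul_const ‖a‖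
  refine Metric.mem_closure_iff.mpr fun ε hε ↦ ?_
  obtain ⟨n, hn⟩ := (tendsto_zero.eventually_lt_const hε).exists
  obtain ⟨v, hv, hle⟩ := approx n a ha
  exact ⟨v, hv, by rw [dist_eq_norm]; exact hle.trans_lt hn⟩

theorem centralizer_closure_span (R : Type*) {A : Type*} [CommSemiring R] [Semiring A]
    [Algebra R A] [TopologicalSpace A] [T2Space A] [SeparatelyContinuousMul A] (s : Set A) :
    (closure (Submodule.span R s : Set A)).centralizer = s.centralizer := by
  refine (Set.centralizer_subset (Submodule.subset_span.trans subset_closure)).antisymm ?_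
  intro x hx
  have span_le : Submodule.span R s ≤ Subalgebra.toSubmodule (Subalgebra.centralizer R {x}) :=
    Submodule.span_le.mpr fun y hy ↦ by
      rintro _ rfl
      exact (hx y hy).symm
  have closure_subset : closure (Submodule.span R s : Set A) ⊆ Set.centralizer {x} :=
    closure_minimal span_le (Set.isClosed_centralizer {x})
  exact fun y hy ↦ (closure_subset hy x rfl).symm

theorem norm_sub_algebraMap_half_norm_le {A : Type*} [CStarAlgebra A] [PartialOrder A]
    [StarOrderedRing A] {b : A} (hb : 0 ≤ b) :
    ‖b - algebraMap ℝ A (‖b‖ / 2)‖ ≤ ‖b‖ / 2 := by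
  have eq_cfc : b - algebraMap ℝ A (‖b‖ / 2) = cfc (fun x : ℝ ↦ x - ‖b‖ / 2) b := by
    rw [cfc_sub .., cfc_id' .., cfc_const ..]
  rw [eq_cfc]
  refine norm_cfc_le (by positivity) fun x hx ↦ ?_
  have x_nonneg : 0 ≤ x := spectrum_nonneg_of_nonneg hb hx
  have x_le : x ≤ ‖b‖ := (Real.le_norm_self x).trans
    (IsometricContinuousFunctionalCalculus.norm_spectrum_le b hx)
  rw [Real.norm_eq_abs, abs_le]
  constructor <;> linarith

/-- The symmetry `2p - 1` in the polar decomposition of a self-adjoint operator `a`, where `p` is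
the projection onto the kernel of `a⁻`: the sign of `a`, with value `1` on the kernel of `a`. If `a`
is not self-adjoint, then `a⁻ = 0` by convention and the symmetry is `1`. -/
noncomputable def polarSymmetry (a : E →L[ℂ] E) : E →L[ℂ] E :=
  2 * (a⁻).ker.starProjection - 1

theorem isSelfAdjoint_polarSymmetry (a : E →L[ℂ] E) : IsSelfAdjoint (polarSymmetry a) := by
  have hp : IsSelfAdjoint (a⁻).ker.starProjection := isStarProjection_starProjection.isSelfAdjoint
  rw [polarSymmetry, two_mul]
  exact (hp.add hp).sub (.one _)

theorem polarSymmetry_mem_unitary (a : E →L[ℂ] E) : polarSymmetry a ∈ unitary (E →L[ℂ] E) :=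
  isStarProjection_starProjection.two_mul_sub_one_mem_unitary

theorem abs_mul_polarSymmetry {a : E →L[ℂ] E} (ha : IsSelfAdjoint a) :
    CFC.abs a * polarSymmetry a = a := by
  set p := (a⁻).ker.starProjection with p_def
  have hp : IsSelfAdjoint p := isStarProjection_starProjection.isSelfAdjoint
  have neg_mul : a⁻ * p = 0 := by
    ext x
    exact (a⁻).ker.starProjection_apply_mem x
  have mul_pos : p * a⁺ = a⁺ := by
    ext x
    exact Submodule.starProjection_eq_self_iff.mpr congr($(CFC.negPart_mul_posPart a) x)
  have pos_mul : a⁺ * p = a⁺ := by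
    simpa [hp.star_eq, (CFC.posPart_nonneg a).star_eq] using congr(star $mul_pos)
  calc CFC.abs a * polarSymmetry a = 2 * (a⁺ * p) + 2 * (a⁻ * p) - (a⁺ + a⁻) := by
        rw [← CFC.posPart_add_negPart a, polarSymmetry, ← p_def]
        noncomm_ring
    _ = a⁺ - a⁻ := by
        rw [pos_mul, neg_mul]
        noncomm_ring
    _ = a := CFC.posPart_sub_negPart a

theorem norm_sub_smul_polarSymmetry_le {a : E →L[ℂ] E} (ha : IsSelfAdjoint a) :
    ‖a - (‖a‖ / 2) • polarSymmetry a‖ ≤ ‖a‖ / 2 := by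
  have factor : a - (‖a‖ / 2) • polarSymmetry a =
      (CFC.abs a - algebraMap ℝ _ (‖a‖ / 2)) * polarSymmetry a := by
    rw [sub_mul, abs_mul_polarSymmetry ha, Algebra.algebraMap_eq_smul_one, smul_one_mul]
  rw [factor, CStarRing.norm_mul_mem_unitary _ (polarSymmetry_mem_unitary a)]
  simpa only [CFC.norm_abs] using norm_sub_algebraMap_half_norm_le (CFC.abs_nonneg a)

theorem isClosed_vonNeumannAlgebra (M : VonNeumannAlgebra E) : IsClosed (M : Set (E →L[ℂ] E)) :=
  M.centralizer_centralizer ▸ Set.isClosed_centralizer _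

theorem negPart_mem_vonNeumannAlgebra {M : VonNeumannAlgebra E} {a : E →L[ℂ] E} (ha : a ∈ M) :
    a⁻ ∈ M :=
  cfcₙ_mem (s := M.toStarSubalgebra) (hs := isClosed_vonNeumannAlgebra M) (·⁻ : ℝ → ℝ) ha

theorem starProjection_ker_mem_vonNeumannAlgebra {M : VonNeumannAlgebra E} {b : E →L[ℂ] E}
    (hb : b ∈ M) :
    b.ker.starProjection ∈ M := by
  rw [VonNeumannAlgebra.IsStarProjection.mem_iff isStarProjection_starProjection]
  intro y hy
  rw [Submodule.range_starProjection, Module.End.mem_invtSubmodule]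
  intro x (hx : b x = 0)
  have comm : b * y = y * b := VonNeumannAlgebra.mem_commutant_iff.mp hy b hb
  calc b (y x) = y (b x) := congr($comm x)
    _ = 0 := by rw [hx, map_zero]

theorem isOrthoProj_iff_isStarProjection {T : E →L[ℂ] E} : IsOrthoProj T ↔ IsStarProjection T :=
  ⟨fun h ↦ ⟨h.2, h.1⟩, fun h ↦ ⟨h.2, h.1⟩⟩

/-- The projection lattice of a von Neumann algebra, as a set of operators. Projections are
described by `IsOrthoProj`, the predicate underlying `projCommutant`. -/
def orthoProjections (M : VonNeumannAlgebra E) : Set (E →L[ℂ] E) :=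
  {T | IsOrthoProj T ∧ T ∈ M}

theorem span_orthoProjections_subset (M : VonNeumannAlgebra E) :
    (Submodule.span ℂ (orthoProjections M) : Set (E →L[ℂ] E)) ⊆ M :=
  show Submodule.span ℂ (orthoProjections M) ≤ Subalgebra.toSubmodule M.toSubalgebra from
    Submodule.span_le.mpr fun _ hT ↦ hT.2

theorem polarSymmetry_mem_span_orthoProjections {M : VonNeumannAlgebra E} {a : E →L[ℂ] E}
    (ha : a ∈ M) : polarSymmetry a ∈ Submodule.span ℂ (orthoProjections M) := by
  have ker_mem : (a⁻).ker.starProjection ∈ Submodule.span ℂ (orthoProjections M) :=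
    Submodule.subset_span
      ⟨isOrthoProj_iff_isStarProjection.mpr isStarProjection_starProjection,
        starProjection_ker_mem_vonNeumannAlgebra (negPart_mem_vonNeumannAlgebra ha)⟩
  have one_mem : 1 ∈ Submodule.span ℂ (orthoProjections M) :=
    Submodule.subset_span ⟨isOrthoProj_iff_isStarProjection.mpr (.one _), one_mem M⟩
  rw [polarSymmetry, two_mul]
  exact sub_mem (add_mem ker_mem ker_mem) one_mem

theorem mem_closure_span_orthoProjections_of_isSelfAdjoint {M : VonNeumannAlgebra E}
    {a : E →L[ℂ] E} (haM : a ∈ M) (ha : IsSelfAdjoint a) :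
    a ∈ closure (Submodule.span ℂ (orthoProjections M) : Set (E →L[ℂ] E)) := by
  refine subset_closure_of_norm_sub_le_mul (r := 2⁻¹)
    (V := (Submodule.span ℂ (orthoProjections M)).toAddSubmonoid)
    (W := {b | b ∈ M ∧ IsSelfAdjoint b}) two_inv_lt_one ?_ ⟨haM, ha⟩
  rintro b ⟨hbM, hb⟩
  have v_mem : (‖b‖ / 2) • polarSymmetry b ∈ Submodule.span ℂ (orthoProjections M) :=
    Submodule.smul_of_tower_mem _ _ (polarSymmetry_mem_span_orthoProjections hbM)
  have v_selfAdjoint : IsSelfAdjoint ((‖b‖ / 2) • polarSymmetry b) :=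
    (IsSelfAdjoint.all _).smul (isSelfAdjoint_polarSymmetry b)
  refine ⟨_, v_mem, ⟨sub_mem hbM (span_orthoProjections_subset M v_mem), hb.sub v_selfAdjoint⟩, ?_⟩
  simpa [div_eq_inv_mul] using norm_sub_smul_polarSymmetry_le hb

open scoped ComplexStarModule in
theorem closure_span_orthoProjections (M : VonNeumannAlgebra E) :
    closure (Submodule.span ℂ (orthoProjections M) : Set (E →L[ℂ] E)) = M := by
  refine (closure_minimal (span_orthoProjections_subset M) (isClosed_vonNeumannAlgebra M)).antisymm
    fun a ha ↦ ?_
  rw [← Submodule.topologicalClosure_coe, ← realPart_add_I_smul_imaginaryPart a]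
  have star_mem : star a ∈ M := star_mem ha
  have re_mem : (ℜ a : E →L[ℂ] E) ∈ M := by
    rw [realPart_apply_coe]
    exact M.toSubalgebra.toSubmodule.smul_of_tower_mem (2⁻¹ : ℝ) (add_mem ha star_mem)
  have im_mem : (ℑ a : E →L[ℂ] E) ∈ M := by
    rw [imaginaryPart_apply_coe]
    exact M.toSubalgebra.smul_mem
      (M.toSubalgebra.toSubmodule.smul_of_tower_mem (2⁻¹ : ℝ) (sub_mem ha star_mem)) _
  exact add_mem (mem_closure_span_orthoProjections_of_isSelfAdjoint re_mem (ℜ a).2)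
    (Submodule.smul_mem _ _
      (mem_closure_span_orthoProjections_of_isSelfAdjoint im_mem (ℑ a).2))

theorem centralizer_orthoProjections (M : VonNeumannAlgebra E) :
    (orthoProjections M).centralizer = M.commutant := by
  rw [← centralizer_closure_span ℂ, closure_span_orthoProjections, VonNeumannAlgebra.coe_commutant]

theorem mem_projCommutant_iff {A : Set (E →L[ℂ] E)} {T : E →L[ℂ] E} :
    T ∈ projCommutant A ↔ IsOrthoProj T ∧ T ∈ A.centralizer :=
  and_congr_right fun _ ↦ forall₂_congr fun _ _ ↦ eq_comm

theorem projCommutant_orthoProjections (M : VonNeumannAlgebra E) :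
    projCommutant (orthoProjections M) = orthoProjections M.commutant := by
  ext T
  rw [mem_projCommutant_iff, centralizer_orthoProjections]
  rfl

/-- The von Neumann algebra of operators commuting with `A` and with the adjoints of its elements.
Including the adjoints makes the commutant of an arbitrary set `A` a star-algebra. -/
noncomputable def starCommutant (A : Set (E →L[ℂ] E)) : VonNeumannAlgebra E where
  toStarSubalgebra := StarSubalgebra.centralizer ℂ A
  centralizer_centralizer' := Set.centralizer_centralizer_centralizer (A ∪ star A)

theorem coe_starCommutant (A : Set (E →L[ℂ] E)) :
    (starCommutant A : Set (E →L[ℂ] E)) = (A ∪ star A).centralizer :=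
  rfl

theorem projCommutant_eq_orthoProjections_starCommutant (A : Set (E →L[ℂ] E)) :
    projCommutant A = orthoProjections (starCommutant A) := by
  ext T
  rw [mem_projCommutant_iff]
  refine and_congr_right fun hT ↦ ?_
  have star_eq : star T = T := hT.1
  rw [← SetLike.mem_coe, coe_starCommutant, Set.centralizer_union, ← Set.star_centralizer,
    Set.mem_inter_iff, Set.mem_star, star_eq, and_self]

theorem stmt18 (S : Set (E →L[ℂ] E)) (hS : ∀ T ∈ S, IsOrthoProj T) :
    S = projCommutant (projCommutant S) ↔
      ∃ M : VonNeumannAlgebra E, S = {T : E →L[ℂ] E | IsOrthoProj T ∧ T ∈ M} := by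
  constructor
  · intro h
    refine ⟨(starCommutant S).commutant, ?_⟩
    rwa [projCommutant_eq_orthoProjections_starCommutant S, projCommutant_orthoProjections] at h
  · rintro ⟨M, rfl⟩
    change orthoProjections M = projCommutant (projCommutant (orthoProjections M))
    rw [projCommutant_orthoProjections, projCommutant_orthoProjections,
      VonNeumannAlgebra.commutant_commutant]
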